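/- Fix p ∈ [1,∞] with Hölder conjugate q, D, E, N ∈ ℕ₊ and S, I, M > 0. Let f and f′ be two real-valued bounded-parameter FNNs in F^1_{N,M} with parameters ({(a_n, b_n, c_n, d_n)}_{n=1}^{4N}, e) and ({(a′_n, b′_n, c′_n, d′_n)}_{n=1}^{4N}, e′), respectively. Then sup_{(s,u)∈B̄_{S,I}} |f(s,u) − f′(s,u)| ≤ 4√M Σ_{n=1}^{4N} |a_n − a′_n| + 2S√M Σ_{n=1}^{4N} ‖b_n − b′_n‖_q + 2I√M Σ_{n=1}^{4N} ‖c_n − c′_n‖_q + 2√M Σ_{n=1}^{4N} |d_n − d′_n| + |e − e′|. -/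

import Mathlib

/-!
The estimate holds neuron by neuron. Writing `x`, `y` for the two pre-activations of a neuron,
`a ρ(x) - a' ρ(y) = (a - a') ρ(x) + a' (ρ(x) - ρ(y))`. As `ρ` is 1-Lipschitz and vanishes at `0`,
the parameter bounds give `ρ(x) ≤ |x| ≤ 4√M`, while Hölder's inequality (`abs_dotp_le`) gives
`|x - y| ≤ S ‖b - b'‖_q + I ‖c - c'‖_q + |d - d'|`. Hölder also shows that the suprema defining
`normOn` are over bounded sets of reals, hence are genuine upper bounds (`abs_dotp_le_normOn`).
-/

open MeasureTheory
open scoped ENNReal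

/-- The `p`-norm on `ℝ^D`, for `p ∈ [1,∞]` (sup-norm when `p = ∞`). -/
noncomputable def pnorm (p : ℝ≥0∞) {D : ℕ} (x : Fin D → ℝ) : ℝ :=
  if p = ⊤ then ⨆ i, |x i| else (∑ i, |x i| ^ p.toReal) ^ (1 / p.toReal)

/-- `D^{1/p}`, with the convention `D^{1/∞} = 1`. -/
noncomputable def dpow (p : ℝ≥0∞) (D : ℕ) : ℝ :=
  if p = ⊤ then 1 else (D : ℝ) ^ (1 / p.toReal)

/-- Dot product on `ℝ^Q`. -/
noncomputable def dotp {Q : ℕ} (ω x : Fin Q → ℝ) : ℝ := ∑ i, ω i * x i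

/-- The seminorm `‖ω‖_B = sup_{x ∈ B} |ω·x|`. -/
noncomputable def normOn {Q : ℕ} (B : Set (Fin Q → ℝ)) (ω : Fin Q → ℝ) : ℝ :=
  ⨆ x ∈ B, |dotp ω x|

/-- Membership in the family `F¹_{N,M}` of real-valued bounded-parameter ReLU FNNs. -/
def memF1 (p : ℝ≥0∞) (D E N : ℕ) (M S I : ℝ)
    (f : (Fin D → ℝ) → (Fin E → ℝ) → ℝ) : Prop :=
  ∃ (a : Fin (4 * N) → ℝ) (b : Fin (4 * N) → Fin D → ℝ)
    (c : Fin (4 * N) → Fin E → ℝ) (d : Fin (4 * N) → ℝ) (e : ℝ),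
    (∀ n, |a n| ≤ 2 * Real.sqrt M) ∧
    (∀ n, normOn {x : Fin D → ℝ | pnorm p x ≤ S} (b n) ≤ Real.sqrt M) ∧
    (∀ n, normOn {u : Fin E → ℝ | pnorm p u ≤ I} (c n) ≤ Real.sqrt M) ∧
    (∀ n, |d n| ≤ 2 * Real.sqrt M) ∧
    |e| ≤ M ∧
    ∀ s u, f s u = (∑ n, a n * max 0 (dotp (b n) s + dotp (c n) u + d n)) + e

theorem pnorm_nonneg (p : ℝ≥0∞) {Q : ℕ} (x : Fin Q → ℝ) : 0 ≤ pnorm p x := by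
  unfold pnorm
  split_ifs
  · exact Real.iSup_nonneg fun i => abs_nonneg _
  · positivity

theorem abs_le_pnorm_top {Q : ℕ} (x : Fin Q → ℝ) (i : Fin Q) : |x i| ≤ pnorm ⊤ x := by
  simp only [pnorm, if_true]
  exact le_ciSup (f := fun i => |x i|) (Set.finite_range _).bddAbove i

theorem pnorm_one {Q : ℕ} (x : Fin Q → ℝ) : pnorm 1 x = ∑ i, |x i| := by
  simp [pnorm]

theorem abs_dotp_le_sum {Q : ℕ} (ω x : Fin Q → ℝ) : |dotp ω x| ≤ ∑ i, |ω i| * |x i| := by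
  unfold dotp
  simpa only [abs_mul] using Finset.abs_sum_le_sum_abs (fun i => ω i * x i) Finset.univ

/-- Hölder's inequality, including the endpoint cases `{p, q} = {1, ∞}`. -/
theorem abs_dotp_le {p q : ℝ≥0∞} (hpq : 1 / p + 1 / q = 1) {Q : ℕ} (ω x : Fin Q → ℝ) :
    |dotp ω x| ≤ pnorm q ω * pnorm p x := by
  refine (abs_dotp_le_sum ω x).trans ?_
  by_cases hp : p = ⊤
  · subst hp
    obtain rfl : q = 1 := by simpa using hpq
    rw [pnorm_one, Finset.sum_mul]
    gcongr with i
    exact abs_le_pnorm_top x i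
  by_cases hq : q = ⊤
  · subst hq
    obtain rfl : p = 1 := by simpa using hpq
    rw [pnorm_one, Finset.mul_sum]
    gcongr with i
    exact abs_le_pnorm_top ω i
  have hconj : q.HolderConjugate p :=
    ENNReal.holderConjugate_iff.2 (by simpa [add_comm] using hpq)
  have h1q : 1 < q := by
    refine lt_of_le_of_ne (ENNReal.HolderConjugate.one_le q p) ?_
    rintro rfl
    have h0 : p⁻¹ = 0 := by
      have h : p⁻¹ + 1 = 0 + 1 := by simpa using hpq
      exact (ENNReal.add_left_inj ENNReal.one_ne_top).1 h
    exact hp (ENNReal.inv_eq_zero.1 h0)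
  have hreal : q.toReal.HolderConjugate p.toReal := by
    refine Real.holderConjugate_iff.2 ⟨?_, ?_⟩
    · simpa using (ENNReal.toReal_lt_toReal ENNReal.one_ne_top hq).2 h1q
    · have hp0 : p ≠ 0 := by
        rintro rfl
        simp at hpq
      have hq0 : q ≠ 0 := (zero_lt_one.trans h1q).ne'
      rw [← ENNReal.toReal_inv, ← ENNReal.toReal_inv,
        ← ENNReal.toReal_add (ENNReal.inv_ne_top.2 hq0) (ENNReal.inv_ne_top.2 hp0), add_comm]
      simpa using congrArg ENNReal.toReal hpq
  have h := Real.inner_le_Lp_mul_Lq Finset.univ (fun i => |ω i|) (fun i => |x i|) hreal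
  simpa [pnorm, hp, hq] using h

theorem abs_dotp_le_of_pnorm_le {p q : ℝ≥0∞} (hpq : 1 / p + 1 / q = 1) {Q : ℕ}
    {R : ℝ} (ω : Fin Q → ℝ) {x : Fin Q → ℝ} (hx : pnorm p x ≤ R) :
    |dotp ω x| ≤ R * pnorm q ω := by
  rw [mul_comm]
  exact (abs_dotp_le hpq ω x).trans (mul_le_mul_of_nonneg_left hx (pnorm_nonneg q ω))

theorem abs_dotp_le_normOn {p q : ℝ≥0∞} (hpq : 1 / p + 1 / q = 1) {Q : ℕ}
    {R : ℝ} (ω : Fin Q → ℝ) {x : Fin Q → ℝ} (hx : pnorm p x ≤ R) :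
    |dotp ω x| ≤ normOn {y : Fin Q → ℝ | pnorm p y ≤ R} ω := by
  have hR : 0 ≤ R := (pnorm_nonneg p x).trans hx
  have hbdd : BddAbove (Set.range fun y : Fin Q → ℝ =>
      ⨆ _ : y ∈ {y : Fin Q → ℝ | pnorm p y ≤ R}, |dotp ω y|) := by
    refine ⟨R * pnorm q ω, ?_⟩
    rintro _ ⟨y, rfl⟩
    -- The inner supremum takes the junk value `0` off the ball, so nonnegativity is needed too.
    exact Real.iSup_le (fun hy => abs_dotp_le_of_pnorm_le hpq ω hy)
      (mul_nonneg hR (pnorm_nonneg q ω))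
  have h := le_ciSup hbdd x
  rwa [ciSup_pos (show x ∈ {y : Fin Q → ℝ | pnorm p y ≤ R} from hx)] at h

theorem dotp_sub {Q : ℕ} (ω ω' x : Fin Q → ℝ) : dotp (ω - ω') x = dotp ω x - dotp ω' x := by
  simp [dotp, sub_mul, Finset.sum_sub_distrib]

theorem neuron_diff_le {r a a' x y δ : ℝ} (ha' : |a'| ≤ 2 * r)
    (hx : |x| ≤ 4 * r) (hxy : |x - y| ≤ δ) :
    |a * max 0 x - a' * max 0 y| ≤ 4 * r * |a - a'| + 2 * r * δ := by
  have h1 : |max 0 x| ≤ 4 * r := by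
    rw [abs_of_nonneg (le_max_left _ _)]
    exact (max_le (abs_nonneg x) (le_abs_self x)).trans hx
  have h2 : |max 0 x - max 0 y| ≤ δ := by
    have h := abs_max_sub_max_le_max 0 x 0 y
    simp only [sub_self, abs_zero, max_eq_right (abs_nonneg (x - y))] at h
    exact h.trans hxy
  calc |a * max 0 x - a' * max 0 y|
      = |max 0 x * (a - a') + a' * (max 0 x - max 0 y)| := by congr 1; ring
    _ ≤ |max 0 x| * |a - a'| + |a'| * |max 0 x - max 0 y| := by
        simpa only [abs_mul] using abs_add_le (max 0 x * (a - a')) (a' * (max 0 x - max 0 y))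
    _ ≤ 4 * r * |a - a'| + 2 * r * δ :=
        add_le_add (mul_le_mul_of_nonneg_right h1 (abs_nonneg _))
          (mul_le_mul ha' h2 (abs_nonneg _) ((abs_nonneg _).trans ha'))

/-- Parameter-difference upper bound on the uniform distance between two
bounded-parameter ReLU FNNs, with `q` the Hölder conjugate of `p`. -/
theorem fnn_param_diff_bound
    (p q : ℝ≥0∞) (hp : 1 ≤ p) (hpq : 1 / p + 1 / q = 1)
    (D E N : ℕ) (hD : 0 < D) (hE : 0 < E) (hN : 0 < N)
    (S I M : ℝ) (hS : 0 < S) (hI : 0 < I) (hM : 0 < M)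
    (a a' : Fin (4 * N) → ℝ) (b b' : Fin (4 * N) → Fin D → ℝ)
    (c c' : Fin (4 * N) → Fin E → ℝ) (d d' : Fin (4 * N) → ℝ) (e e' : ℝ)
    (ha : ∀ n, |a n| ≤ 2 * Real.sqrt M) (ha' : ∀ n, |a' n| ≤ 2 * Real.sqrt M)
    (hb : ∀ n, normOn {x : Fin D → ℝ | pnorm p x ≤ S} (b n) ≤ Real.sqrt M)
    (hb' : ∀ n, normOn {x : Fin D → ℝ | pnorm p x ≤ S} (b' n) ≤ Real.sqrt M)
    (hc : ∀ n, normOn {u : Fin E → ℝ | pnorm p u ≤ I} (c n) ≤ Real.sqrt M)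
    (hc' : ∀ n, normOn {u : Fin E → ℝ | pnorm p u ≤ I} (c' n) ≤ Real.sqrt M)
    (hd : ∀ n, |d n| ≤ 2 * Real.sqrt M) (hd' : ∀ n, |d' n| ≤ 2 * Real.sqrt M)
    (he : |e| ≤ M) (he' : |e'| ≤ M) :
    ∀ s, pnorm p s ≤ S → ∀ u, pnorm p u ≤ I →
      |((∑ n, a n * max 0 (dotp (b n) s + dotp (c n) u + d n)) + e) -
          ((∑ n, a' n * max 0 (dotp (b' n) s + dotp (c' n) u + d' n)) + e')| ≤
        4 * Real.sqrt M * (∑ n, |a n - a' n|) +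
        2 * S * Real.sqrt M * (∑ n, pnorm q (b n - b' n)) +
        2 * I * Real.sqrt M * (∑ n, pnorm q (c n - c' n)) +
        2 * Real.sqrt M * (∑ n, |d n - d' n|) + |e - e'| := by
  intro s hs u hu
  have hneuron : ∀ n, |a n * max 0 (dotp (b n) s + dotp (c n) u + d n) -
      a' n * max 0 (dotp (b' n) s + dotp (c' n) u + d' n)| ≤
      4 * Real.sqrt M * |a n - a' n| + 2 * Real.sqrt M *
        (S * pnorm q (b n - b' n) + I * pnorm q (c n - c' n) + |d n - d' n|) := by
    intro n
    refine neuron_diff_le (ha' n) ?_ ?_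
    · have h1 := (abs_dotp_le_normOn hpq (b n) hs).trans (hb n)
      have h2 := (abs_dotp_le_normOn hpq (c n) hu).trans (hc n)
      have h3 := abs_add_three (dotp (b n) s) (dotp (c n) u) (d n)
      linarith [hd n]
    · have h1 := abs_dotp_le_of_pnorm_le hpq (b n - b' n) hs
      have h2 := abs_dotp_le_of_pnorm_le hpq (c n - c' n) hu
      rw [dotp_sub] at h1 h2
      have h3 := abs_add_three (dotp (b n) s - dotp (b' n) s)
        (dotp (c n) u - dotp (c' n) u) (d n - d' n)
      rw [show dotp (b n) s + dotp (c n) u + d n - (dotp (b' n) s + dotp (c' n) u + d' n) =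
        (dotp (b n) s - dotp (b' n) s) + (dotp (c n) u - dotp (c' n) u) + (d n - d' n) by ring]
      linarith
  rw [add_sub_add_comm, ← Finset.sum_sub_distrib]
  refine (abs_add_le _ _).trans (add_le_add_left ?_ _)
  refine (Finset.abs_sum_le_sum_abs _ _).trans
    ((Finset.sum_le_sum fun n _ => hneuron n).trans (le_of_eq ?_))
  simp only [Finset.sum_add_distrib, ← Finset.mul_sum]
  ring
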